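/- Let (δ_i)_{i∈I} be a family of probability distributions on the nonnegative integers. Then this family is tight if and only if it admits an upper tail bound, i.e., a probability distribution δ on the nonnegative integers such that δ_i({x ≥ j}) ≤ δ({x ≥ j}) for all i ∈ I and all j ≥ 0. -/

import Mathlib

/-- The tail probability `p({x ≥ s})` of a distribution `p` on the nonnegative integers. -/
noncomputable def tailProb (p : ℕ → ℝ) (s : ℕ) : ℝ :=
  ∑' x : ℕ, if s ≤ x then p x else 0

/-! Every upper tail bound dominates the pointwise supremum of the tail functions of the family.
This supremum is antitone and, by tightness, tends to zero, so its successive differences form a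
nonnegative summable sequence with precisely these tails. Their total mass is at most one, and
adding the missing mass at `0` does not decrease any tail. Conversely, the tails of an upper tail
bound tend to zero, and they control the tails of the whole family. -/

open Filter Topology

section tailProb

variable {p q : ℕ → ℝ}

theorem tailProb_eq_tsum_add (p : ℕ → ℝ) (s : ℕ) : tailProb p s = ∑' x, p (x + s) := by
  have hsupp : (Function.support fun x => if s ≤ x then p x else 0) ⊆ Set.range (· + s) := by
    intro x hx
    have hsx : s ≤ x := by
      by_contra hlt
      simp [hlt] at hx
    exact ⟨x - s, Nat.sub_add_cancel hsx⟩
  simpa [tailProb] using ((add_left_injective s).tsum_eq hsupp).symm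

theorem tailProb_zero (p : ℕ → ℝ) : tailProb p 0 = ∑' x, p x := by
  simp [tailProb]

theorem tailProb_nonneg (hp : ∀ x, 0 ≤ p x) (s : ℕ) : 0 ≤ tailProb p s := by
  rw [tailProb_eq_tsum_add]
  exact tsum_nonneg fun x => hp (x + s)

theorem tailProb_mono (hp : Summable p) (hq : Summable q) (hpq : p ≤ q) :
    tailProb p ≤ tailProb q := by
  intro s
  rw [tailProb_eq_tsum_add, tailProb_eq_tsum_add]
  exact Summable.tsum_le_tsum (fun x => hpq (x + s)) ((summable_nat_add_iff s).2 hp)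
    ((summable_nat_add_iff s).2 hq)

theorem tailProb_eq_add_tailProb_succ (hp : Summable p) (s : ℕ) :
    tailProb p s = p s + tailProb p (s + 1) := by
  simp only [tailProb_eq_tsum_add]
  rw [((summable_nat_add_iff s).2 hp).tsum_eq_zero_add, zero_add]
  simp only [add_assoc, add_comm 1 s]

theorem tailProb_antitone (hnn : ∀ x, 0 ≤ p x) (hp : Summable p) : Antitone (tailProb p) :=
  antitone_nat_of_succ_le fun s => by
    rw [tailProb_eq_add_tailProb_succ hp s]
    exact le_add_of_nonneg_left (hnn s)

theorem tendsto_tailProb_atTop (p : ℕ → ℝ) : Tendsto (tailProb p) atTop (𝓝 0) := by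
  simpa only [← tailProb_eq_tsum_add] using tendsto_sum_nat_add p

end tailProb

section Antitone

variable {G : ℕ → ℝ}

theorem hasSum_sub_succ_of_antitone {l : ℝ} (hG : Antitone G) (hlim : Tendsto G atTop (𝓝 l)) :
    HasSum (fun x => G x - G (x + 1)) (G 0 - l) := by
  rw [hasSum_iff_tendsto_nat_of_nonneg fun x => sub_nonneg.2 (hG x.le_succ)]
  simpa only [Finset.sum_range_sub'] using hlim.const_sub (G 0)

theorem tailProb_sub_succ_of_antitone (hG : Antitone G) (hlim : Tendsto G atTop (𝓝 0)) :
    tailProb (fun x => G x - G (x + 1)) = G := by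
  funext s
  have hshift : Antitone fun x => G (x + s) := fun _ _ hab => hG (Nat.add_le_add_right hab s)
  have hsum := hasSum_sub_succ_of_antitone hshift ((tendsto_add_atTop_iff_nat s).2 hlim)
  simpa [tailProb_eq_tsum_add, add_right_comm] using hsum.tsum_eq

theorem exists_hasSum_le_tailProb {m : ℝ} (hG : Antitone G) (hlim : Tendsto G atTop (𝓝 0))
    (hm : G 0 ≤ m) : ∃ d : ℕ → ℝ, (∀ x, 0 ≤ d x) ∧ HasSum d m ∧ G ≤ tailProb d := by
  let e : ℕ → ℝ := fun x => G x - G (x + 1)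
  let c : ℕ → ℝ := Pi.single 0 (m - G 0)
  have he : HasSum e (G 0) := by simpa using hasSum_sub_succ_of_antitone hG hlim
  have hc : 0 ≤ c := Pi.single_nonneg.2 (sub_nonneg.2 hm)
  have hsum : HasSum (e + c) (G 0 + (m - G 0)) := he.add (hasSum_pi_single 0 (m - G 0))
  rw [add_sub_cancel] at hsum
  refine ⟨e + c, fun x => add_nonneg (sub_nonneg.2 (hG x.le_succ)) (hc x), hsum, ?_⟩
  calc G = tailProb e := (tailProb_sub_succ_of_antitone hG hlim).symm
    _ ≤ tailProb (e + c) := tailProb_mono he.summable hsum.summable (le_add_of_nonneg_right hc)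

end Antitone

/-- The pointwise supremum of the tail functions of the family `δ`. As a supremum of reals it is
`0` wherever these are unbounded above, and for the empty family. -/
noncomputable def supTailProb {I : Type*} (δ : I → ℕ → ℝ) (s : ℕ) : ℝ :=
  ⨆ i, tailProb (δ i) s

section supTailProb

variable {I : Type*} {δ : I → ℕ → ℝ}

theorem supTailProb_nonneg (hnn : ∀ i x, 0 ≤ δ i x) (s : ℕ) : 0 ≤ supTailProb δ s :=
  Real.iSup_nonneg fun i => tailProb_nonneg (hnn i) s

theorem tailProb_le_supTailProb (hnn : ∀ i x, 0 ≤ δ i x) (hsum : ∀ i, Summable (δ i))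
    (hbdd : BddAbove (Set.range fun i => ∑' x, δ i x)) (i : I) :
    tailProb (δ i) ≤ supTailProb δ := by
  intro s
  refine le_ciSup (f := fun i => tailProb (δ i) s) (hbdd.range_mono _ fun i => ?_) i
  rw [← tailProb_zero]
  exact tailProb_antitone (hnn i) (hsum i) s.zero_le

theorem supTailProb_antitone (hnn : ∀ i x, 0 ≤ δ i x) (hsum : ∀ i, Summable (δ i))
    (hbdd : BddAbove (Set.range fun i => ∑' x, δ i x)) : Antitone (supTailProb δ) :=
  fun a _ hab => Real.iSup_le
    (fun i => (tailProb_antitone (hnn i) (hsum i) hab).trans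
      (tailProb_le_supTailProb hnn hsum hbdd i a))
    (supTailProb_nonneg hnn a)

theorem tendsto_supTailProb_of_tight (hnn : ∀ i x, 0 ≤ δ i x) (hsum : ∀ i, Summable (δ i))
    (htight : ∀ ε : ℝ, 0 < ε → ∃ j : ℕ, ∀ i, tailProb (δ i) j ≤ ε) :
    Tendsto (supTailProb δ) atTop (𝓝 0) := by
  refine tendsto_order.2 ⟨fun a ha => .of_forall fun s => ha.trans_le (supTailProb_nonneg hnn s),
    fun ε hε => ?_⟩
  obtain ⟨j, hj⟩ := htight (ε / 2) (half_pos hε)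
  filter_upwards [eventually_ge_atTop j] with s hs
  have hs_le : ∀ i, tailProb (δ i) s ≤ ε / 2 := fun i =>
    (tailProb_antitone (hnn i) (hsum i) hs).trans (hj i)
  calc supTailProb δ s ≤ ε / 2 := Real.iSup_le hs_le (half_pos hε).le
    _ < ε := half_lt_self hε

end supTailProb

theorem tight_of_upperTailBound {I : Type*} {δ : I → ℕ → ℝ} {d : ℕ → ℝ}
    (hd : ∀ i j, tailProb (δ i) j ≤ tailProb d j) {ε : ℝ} (hε : 0 < ε) :
    ∃ j : ℕ, ∀ i, tailProb (δ i) j ≤ ε := by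
  obtain ⟨j, hj⟩ := ((tendsto_tailProb_atTop d).eventually_le_const hε).exists
  exact ⟨j, fun i => (hd i j).trans hj⟩

theorem tight_iff_exists_upperTailBound_general {I : Type*} (δ : I → ℕ → ℝ)
    (hnn : ∀ i x, 0 ≤ δ i x) (hsum : ∀ i, Summable (δ i)) (hmass : ∀ i, ∑' x, δ i x ≤ 1) :
    (∀ ε : ℝ, 0 < ε → ∃ j : ℕ, ∀ i, tailProb (δ i) j ≤ ε) ↔
      (∃ d : ℕ → ℝ, (∀ x, 0 ≤ d x) ∧ HasSum d 1 ∧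
        ∀ i, ∀ j : ℕ, tailProb (δ i) j ≤ tailProb d j) := by
  refine ⟨fun htight => ?_, fun ⟨_, _, _, hd⟩ _ hε => tight_of_upperTailBound hd hε⟩
  have hbdd : BddAbove (Set.range fun i => ∑' x, δ i x) := ⟨1, Set.forall_mem_range.2 hmass⟩
  have hzero : supTailProb δ 0 ≤ 1 :=
    Real.iSup_le (fun i => (tailProb_zero (δ i)).trans_le (hmass i)) zero_le_one
  obtain ⟨d, hd_nonneg, hd_sum, hd⟩ := exists_hasSum_le_tailProb
    (supTailProb_antitone hnn hsum hbdd) (tendsto_supTailProb_of_tight hnn hsum htight) hzero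
  exact ⟨d, hd_nonneg, hd_sum, fun i j =>
    (tailProb_le_supTailProb hnn hsum hbdd i j).trans (hd j)⟩

/-- A family of probability distributions on ℕ is tight iff it admits an upper tail bound. -/
theorem tight_iff_exists_upperTailBound {I : Type*} (δ : I → ℕ → ℝ)
    (hnn : ∀ i x, 0 ≤ δ i x) (hsum : ∀ i, HasSum (δ i) 1) :
    (∀ ε : ℝ, 0 < ε → ∃ j : ℕ, ∀ i, tailProb (δ i) j ≤ ε) ↔
      (∃ d : ℕ → ℝ, (∀ x, 0 ≤ d x) ∧ HasSum d 1 ∧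
        ∀ i, ∀ j : ℕ, tailProb (δ i) j ≤ tailProb d j) :=
  tight_iff_exists_upperTailBound_general δ hnn (fun i => (hsum i).summable)
    fun i => (hsum i).tsum_eq.le
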